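/- arXiv:2208.03627 — 2 statements merged into one kernel-verified Lean document; each statement's English description precedes it below -/
import Mathlib

section
/- If g₀: ℝ³×ℝ³ → ℝ satisfies |g₀(y,u)| ≤ (1+|y|²)^{-n}(1+|u|)^{-γ} for some n, γ ≥ 0, then the solution of the damped kinetic Fokker-Planck equation satisfies |(G₁(t) * g₀)(x,v)| ≤ C(n,γ) e^{-t} (1+|x|²)^{-n}(1+|v|)^{-γ} for all t > 0, x, v ∈ ℝ³, where G₁ is the explicit kernel of ∂_t g + v·∇_x g - Lg + 2g = 0. -/
open MeasureTheory Real

noncomputable section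

abbrev E3 := EuclideanSpace ℝ (Fin 3)

/-- `D(t) = ½( t(1 - e^{-2t}) - 2(1 - e^{-t})² )`. -/
def Dfun (t : ℝ) : ℝ :=
  (t * (1 - Real.exp (-(2 * t))) - 2 * (1 - Real.exp (-t)) ^ 2) / 2

/-- The explicit Green's function `G₁(t,x,v;y,u)` of the damped kinetic
Fokker–Planck equation `∂_t g + v·∇_x g - Lg + 2g = 0`. -/
def G1ker (t : ℝ) (x v y u : E3) : ℝ :=
  (2 * Real.pi) ^ (-(6 : ℝ)) * (Real.pi / Real.sqrt (Dfun t)) ^ (3 : ℕ) *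
    Real.exp
      (-((1 - Real.exp (-(2 * t))) / (8 * Dfun t) *
            ‖x - y - ((1 - Real.exp (-t)) / (1 + Real.exp (-t))) • (v + u)‖ ^ 2
          + (1 + Real.exp (-(2 * t))) / (4 * (1 - Real.exp (-(2 * t)))) *
            ‖(2 * Real.exp (-t) / (1 + Real.exp (-(2 * t)))) • v - u‖ ^ 2
          + (1 - Real.exp (-(2 * t))) / (4 * (1 + Real.exp (-(2 * t)))) * ‖v‖ ^ 2
          + 2 * t))

lemma aux_poly_exp (m : ℝ) (hm : 0 ≤ m) :
    ∃ K : ℝ, 0 < K ∧ ∀ s : ℝ, 0 ≤ s → (1 + s) ^ m ≤ K * Real.exp (s / 2) := by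
  refine ⟨(2 * (m + 1)) ^ m, by positivity, fun s hs => ?_⟩
  have h1 : 1 + s ≤ (2 * (m + 1)) * Real.exp (s / (2 * (m + 1))) := by
    have h := Real.add_one_le_exp (s / (2 * (m + 1)))
    have h2 : (2 * (m + 1)) * (s / (2 * (m + 1)) + 1) = s + 2 * (m + 1) := by
      field_simp
    have h3 := mul_le_mul_of_nonneg_left h (show 0 ≤ 2 * (m + 1) by positivity)
    linarith
  calc (1 + s) ^ m ≤ ((2 * (m + 1)) * Real.exp (s / (2 * (m + 1)))) ^ m :=
        Real.rpow_le_rpow (by positivity) h1 hm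
    _ = (2 * (m + 1)) ^ m * Real.exp (s / (2 * (m + 1)) * m) := by
        rw [Real.mul_rpow (by positivity) (by positivity), ← Real.exp_mul]
    _ ≤ _ := by
        gcongr
        rw [div_mul_eq_mul_div, div_le_div_iff₀ (by positivity) (by positivity)]
        nlinarith

lemma aux_rpow_neg {X Y R n : ℝ} (hn : 0 ≤ n) (hX : 0 < X) (hY : 0 < Y) (hR : 0 < R)
    (h : X ≤ R * Y) : Y ^ (-n) ≤ R ^ n * X ^ (-n) := by
  rw [Real.rpow_neg hY.le, Real.rpow_neg hX.le, ← div_eq_mul_inv, inv_eq_one_div,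
    div_le_div_iff₀ (by positivity) (by positivity), one_mul, ← Real.mul_rpow hR.le hY.le]
  exact Real.rpow_le_rpow hX.le h hn

lemma aux_key (n γ : ℝ) (hn : 0 ≤ n) (hγ : 0 ≤ γ) :
    ∃ K : ℝ, 0 < K ∧ ∀ t A B V X Y p q : ℝ, 0 < t → 0 ≤ A → 0 ≤ B → 0 ≤ V →
      0 < X → 0 < Y → 0 < p → 0 < q →
      X ≤ 100 * (1 + t) * (1 + (A + B + V)) * Y → p ≤ 16 * (1 + (A + B + V)) * q →
      Real.exp (-(A + B + V + 2 * t)) * (Y ^ (-n) * q ^ (-γ)) ≤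
        K * Real.exp (-t) * X ^ (-n) * p ^ (-γ) *
          (Real.exp (-(A / 2)) * Real.exp (-(B / 2))) := by
  obtain ⟨K1, hK1, h1⟩ := aux_poly_exp n hn
  obtain ⟨K2, hK2, h2⟩ := aux_poly_exp (n + γ) (by positivity)
  refine ⟨100 ^ n * 16 ^ γ * K1 * K2, by positivity, ?_⟩
  intro t A B V X Y p q ht hA hB hV hX hY hp hq hXY hpq
  have hS : 0 ≤ A + B + V := by positivity
  have a1 := aux_rpow_neg hn hX hY (by positivity) hXY
  have a2 := aux_rpow_neg hγ hp hq (by positivity) hpq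
  have b1 := h1 t ht.le
  have b2 := h2 _ hS
  rw [Real.mul_rpow (by positivity) (by positivity),
    Real.mul_rpow (by positivity) (by positivity)] at a1
  rw [Real.mul_rpow (by positivity) (by positivity)] at a2
  rw [Real.rpow_add (by positivity)] at b2
  calc Real.exp (-(A + B + V + 2 * t)) * (Y ^ (-n) * q ^ (-γ))
      ≤ Real.exp (-(A + B + V + 2 * t)) *
        ((100 ^ n * (1 + t) ^ n * (1 + (A + B + V)) ^ n * X ^ (-n)) *
          (16 ^ γ * (1 + (A + B + V)) ^ γ * p ^ (-γ))) := by gcongr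
    _ = (100 ^ n * 16 ^ γ * X ^ (-n) * p ^ (-γ)) * (Real.exp (-(A + B + V + 2 * t)) *
        ((1 + t) ^ n * ((1 + (A + B + V)) ^ n * (1 + (A + B + V)) ^ γ))) := by ring
    _ ≤ (100 ^ n * 16 ^ γ * X ^ (-n) * p ^ (-γ)) * (Real.exp (-(A + B + V + 2 * t)) *
        ((K1 * Real.exp (t / 2)) * (K2 * Real.exp ((A + B + V) / 2)))) := by gcongr
    _ = (100 ^ n * 16 ^ γ * X ^ (-n) * p ^ (-γ)) * (K1 * K2) *
        Real.exp (-(A + B + V + 2 * t) + t / 2 + (A + B + V) / 2) := by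
        rw [Real.exp_add, Real.exp_add]; ring
    _ ≤ (100 ^ n * 16 ^ γ * X ^ (-n) * p ^ (-γ)) * (K1 * K2) *
        Real.exp (-t + (-(A / 2) + -(B / 2))) := by
        refine mul_le_mul_of_nonneg_left (Real.exp_le_exp.2 (by linarith)) (by positivity)
    _ = _ := by
        rw [Real.exp_add, Real.exp_add]; ring

lemma aux_gauss {b : ℝ} (hb : 0 < b) (c : E3) :
    ∫⁻ y : E3, ENNReal.ofReal (Real.exp (-(b * ‖c - y‖ ^ 2))) =
      ENNReal.ofReal ((π / b) ^ (3 / 2 : ℝ)) := by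
  rw [lintegral_sub_left_eq_self (fun y : E3 => ENNReal.ofReal (Real.exp (-(b * ‖y‖ ^ 2)))) c]
  have h := GaussianFourier.integral_rexp_neg_mul_sq_norm (V := E3) hb
  have hf : Module.finrank ℝ E3 = 3 := by simp
  rw [hf] at h
  have hi : Integrable (fun y : E3 => Real.exp (-b * ‖y‖ ^ 2)) := by
    apply Integrable.of_integral_ne_zero
    rw [h]
    have : 0 < π / b := by positivity
    positivity
  simp only [← neg_mul]
  rw [← ofReal_integral_eq_lintegral_ofReal hi (Filter.Eventually.of_forall fun y => by positivity),
    h]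
  norm_num

lemma aux_double {a b α β M : ℝ} (hα : 0 < α) (hβ : 0 < β) (hM : 0 ≤ M) (x v : E3)
    (f : E3 → E3 → ℝ)
    (hf : ∀ y u, |f y u| ≤ M * (Real.exp (-(α * ‖x - y - b • (v + u)‖ ^ 2)) *
      Real.exp (-(β * ‖a • v - u‖ ^ 2)))) :
    |∫ y : E3, ∫ u : E3, f y u| ≤ M * ((π / α) ^ (3 / 2 : ℝ) * (π / β) ^ (3 / 2 : ℝ)) := by
  have hR : 0 ≤ M * ((π / α) ^ (3 / 2 : ℝ) * (π / β) ^ (3 / 2 : ℝ)) := by positivity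
  rw [← ENNReal.ofReal_le_ofReal_iff hR, ← Real.norm_eq_abs, ofReal_norm]
  calc ‖∫ y : E3, ∫ u : E3, f y u‖ₑ ≤ ∫⁻ y : E3, ‖∫ u : E3, f y u‖ₑ :=
        enorm_integral_le_lintegral_enorm _
    _ ≤ ∫⁻ y : E3, ∫⁻ u : E3, ‖f y u‖ₑ :=
        lintegral_mono fun y => enorm_integral_le_lintegral_enorm _
    _ ≤ ∫⁻ y : E3, ∫⁻ u : E3, ENNReal.ofReal (M * (Real.exp (-(α * ‖x - y - b • (v + u)‖ ^ 2)) *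
      Real.exp (-(β * ‖a • v - u‖ ^ 2)))) := by
        refine lintegral_mono fun y => lintegral_mono fun u => ?_
        rw [← ofReal_norm, Real.norm_eq_abs]
        exact ENNReal.ofReal_le_ofReal (hf y u)
    _ = ∫⁻ u : E3, ∫⁻ y : E3, ENNReal.ofReal (M * (Real.exp (-(α * ‖x - y - b • (v + u)‖ ^ 2)) *
      Real.exp (-(β * ‖a • v - u‖ ^ 2)))) := by
        apply lintegral_lintegral_swap
        apply Measurable.aemeasurable
        apply ENNReal.measurable_ofReal.comp
        apply Continuous.measurable
        fun_prop
    _ = ∫⁻ u : E3, ENNReal.ofReal M * ENNReal.ofReal ((π / α) ^ (3 / 2 : ℝ)) *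
          ENNReal.ofReal (Real.exp (-(β * ‖a • v - u‖ ^ 2))) := by
        refine lintegral_congr fun u => ?_
        have e : ∀ y : E3, ENNReal.ofReal (M * (Real.exp (-(α * ‖x - y - b • (v + u)‖ ^ 2)) *
            Real.exp (-(β * ‖a • v - u‖ ^ 2)))) =
            (ENNReal.ofReal M * ENNReal.ofReal (Real.exp (-(β * ‖a • v - u‖ ^ 2)))) *
            ENNReal.ofReal (Real.exp (-(α * ‖(x - b • (v + u)) - y‖ ^ 2))) := by
          intro y
          rw [ENNReal.ofReal_mul hM, ENNReal.ofReal_mul (Real.exp_nonneg _),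
            sub_right_comm x y]
          ring
        simp only [e]
        rw [lintegral_const_mul' _ _ (by finiteness), aux_gauss hα]
        ring
    _ = _ := by
        rw [lintegral_const_mul' _ _ (by finiteness), aux_gauss hβ, ENNReal.ofReal_mul hM,
          ENNReal.ofReal_mul (by positivity)]
        ring

set_option maxHeartbeats 1000000 in
/-- Geometric inequalities. -/
lemma aux_geom {t α β τ a b : ℝ} (ht : 0 < t) (hb0 : 0 ≤ b) (hb1 : b ≤ 1) (hbτ : b ≤ τ)
    (ha0 : 0 ≤ a) (ha1 : a ≤ 1) (hτ1 : τ ≤ 1)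
    (haτ : a ^ 2 + τ ^ 2 = 1) (hα : 1 ≤ 4 * t * α) (hβ : 1 / 4 ≤ β) (x v y u : E3) :
    let A := α * ‖x - y - b • (v + u)‖ ^ 2
    let B := β * ‖a • v - u‖ ^ 2
    let V := τ / 4 * ‖v‖ ^ 2
    1 + ‖x‖ ^ 2 ≤ 100 * (1 + t) * (1 + (A + B + V)) * (1 + ‖y‖ ^ 2) ∧
      1 + ‖v‖ ≤ 16 * (1 + (A + B + V)) * (1 + ‖u‖) := by
  intro A B V
  have hα0 : 0 < α := by
    by_contra h
    nlinarith
  have hτ0 : 0 ≤ τ := hb0.trans hbτ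
  have hA0 : 0 ≤ A := by positivity
  have hB0 : 0 ≤ B := by positivity
  have hV0 : 0 ≤ V := by positivity
  have hw : ‖x - y - b • (v + u)‖ ^ 2 ≤ 4 * t * A := by
    have := mul_le_mul_of_nonneg_right hα (sq_nonneg ‖x - y - b • (v + u)‖)
    simp only [A]; linarith
  have hz : ‖a • v - u‖ ^ 2 ≤ 4 * B := by
    have := mul_le_mul_of_nonneg_right hβ (sq_nonneg ‖a • v - u‖)
    simp only [B]; linarith
  have hv : τ * ‖v‖ ^ 2 = 4 * V := by simp only [V]; ring
  have n1 : ‖x‖ ≤ ‖y‖ + ‖x - y - b • (v + u)‖ + b * (2 * ‖v‖ + ‖a • v - u‖) := by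
    have e1 : x = y + (x - y - b • (v + u)) + b • (v + a • v - (a • v - u)) := by
      rw [show v + a • v - (a • v - u) = v + u by abel]; abel
    have e2 : ‖v + a • v - (a • v - u)‖ ≤ 2 * ‖v‖ + ‖a • v - u‖ := by
      have h1 := norm_sub_le (v + a • v) (a • v - u)
      have h2 := norm_add_le v (a • v)
      have h3 : ‖a • v‖ ≤ ‖v‖ := by
        rw [norm_smul, Real.norm_of_nonneg ha0]
        nlinarith [norm_nonneg v]
      linarith
    have e3 : ‖b • (v + a • v - (a • v - u))‖ ≤ b * (2 * ‖v‖ + ‖a • v - u‖) := by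
      rw [norm_smul, Real.norm_of_nonneg hb0]
      gcongr
    calc ‖x‖ = ‖y + (x - y - b • (v + u)) + b • (v + a • v - (a • v - u))‖ := by rw [← e1]
      _ ≤ _ := (norm_add₃_le).trans (by linarith)
  have n2 : a * ‖v‖ ≤ ‖u‖ + ‖a • v - u‖ := by
    have h := norm_add_le u (a • v - u)
    rw [add_sub_cancel, norm_smul, Real.norm_of_nonneg ha0] at h
    exact h
  clear_value A B V
  have hw0 := norm_nonneg (x - y - b • (v + u))
  have hz0 := norm_nonneg (a • v - u)
  have hx0 := norm_nonneg x
  have hy0 := norm_nonneg y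
  have hv0 := norm_nonneg v
  have hu0 := norm_nonneg u
  generalize ‖x - y - b • (v + u)‖ = w at *
  generalize ‖a • v - u‖ = z at *
  generalize ‖x‖ = x at *
  generalize ‖y‖ = y at *
  generalize ‖v‖ = v at *
  generalize ‖u‖ = u at *
  have hS : 0 ≤ A + B + V := by positivity
  constructor
  · have hbv : (b * v) ^ 2 ≤ 4 * V := by
      have : b ^ 2 ≤ τ := by nlinarith
      nlinarith [mul_le_mul_of_nonneg_right this (sq_nonneg v)]
    have hbz : (b * z) ^ 2 ≤ 4 * B := by
      have : b ^ 2 ≤ 1 := by nlinarith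
      nlinarith [mul_le_mul_of_nonneg_right this (sq_nonneg z)]
    have hx2 : x ^ 2 ≤ 4 * (y ^ 2 + w ^ 2 + 4 * (b * v) ^ 2 + (b * z) ^ 2) := by
      have : x ^ 2 ≤ (y + w + b * (2 * v + z)) ^ 2 := by gcongr
      nlinarith [sq_nonneg (y - w), sq_nonneg (y - 2 * (b * v)), sq_nonneg (y - b * z),
        sq_nonneg (w - 2 * (b * v)), sq_nonneg (w - b * z), sq_nonneg (2 * (b * v) - b * z)]
    have hx3 : 1 + x ^ 2 ≤ 100 * (y ^ 2 + (1 + t) * (1 + (A + B + V))) := by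
      nlinarith [mul_nonneg ht.le hA0, mul_nonneg ht.le hB0, mul_nonneg ht.le hV0]
    have h1 : 1 ≤ (1 + t) * (1 + (A + B + V)) := by nlinarith [mul_nonneg ht.le hS]
    have h2 := mul_le_mul_of_nonneg_right h1 (sq_nonneg y)
    linarith
  · have hv2 : v ^ 2 ≤ 2 * u ^ 2 + 8 * B + 4 * V := by
      have h1 : (a * v) ^ 2 ≤ (u + z) ^ 2 := by gcongr
      have h2 : τ ^ 2 * v ^ 2 ≤ τ * v ^ 2 := by
        have : τ ^ 2 ≤ τ := by nlinarith
        exact mul_le_mul_of_nonneg_right this (sq_nonneg v)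
      have h3 : v ^ 2 = (a * v) ^ 2 + τ ^ 2 * v ^ 2 := by
        rw [mul_pow, ← add_mul, haτ, one_mul]
      nlinarith [sq_nonneg (u - z)]
    refine (sq_le_sq₀ (by positivity) (by positivity)).1 ?_
    have h4 : (1 + v) ^ 2 ≤ 16 * (1 + (A + B + V)) * (1 + u) ^ 2 := by
      nlinarith [sq_nonneg (v - 1), mul_nonneg hS hu0, mul_nonneg hS (sq_nonneg u)]
    have h5 : (16 * (1 + (A + B + V)) * (1 + u)) ^ 2 =
      16 * (1 + (A + B + V)) * (16 * (1 + (A + B + V)) * (1 + u) ^ 2) := by ring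
    rw [h5]
    have h6 : 0 ≤ 16 * (1 + (A + B + V)) * (1 + u) ^ 2 := by positivity
    exact h4.trans (le_mul_of_one_le_left h6 (by linarith))

lemma aux_const {α β D : ℝ} (hα : 0 < α) (hβ : 0 < β) (hD : 0 < D) (h : 1 ≤ 32 * (α * β * D)) :
    (π / √D) ^ (3 : ℕ) * ((π / (α / 2)) ^ (3 / 2 : ℝ) * (π / (β / 2)) ^ (3 / 2 : ℝ)) ≤
      (128 * π ^ 4) ^ (3 / 2 : ℝ) := by
  have h1 : (π / √D) ^ (3 : ℕ) = (π ^ 2 / D) ^ (3 / 2 : ℝ) := by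
    have : π ^ 2 / D = (π / √D) ^ (2 : ℝ) := by
      rw [Real.rpow_two, div_pow, Real.sq_sqrt hD.le]
    rw [this, ← Real.rpow_mul (by positivity), ← Real.rpow_natCast]
    norm_num
  have p := Real.pi_pos
  rw [h1, ← Real.mul_rpow (by positivity) (by positivity),
    ← Real.mul_rpow (by positivity) (by positivity)]
  apply Real.rpow_le_rpow (by positivity) _ (by norm_num)
  have : π ^ 2 / D * (π / (α / 2) * (π / (β / 2))) = 4 * π ^ 4 / (α * β * D) := by
    field_simp
    ring
  rw [this, div_le_iff₀ (by positivity)]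
  nlinarith [pow_pos p 4]

/-- Pointwise space–velocity decay of `G₁(t) * g₀` (Lemma 4.1, estimate (4.1)). -/
theorem G1_convolution_decay (n γ : ℝ) (hn : 0 ≤ n) (hγ : 0 ≤ γ) :
    ∃ C : ℝ, 0 < C ∧ ∀ g₀ : E3 → E3 → ℝ,
      (∀ y u, |g₀ y u| ≤ (1 + ‖y‖ ^ 2) ^ (-n) * (1 + ‖u‖) ^ (-γ)) →
      ∀ t : ℝ, 0 < t → ∀ x v : E3,
        |∫ y : E3, ∫ u : E3, G1ker t x v y u * g₀ y u| ≤
          C * Real.exp (-t) * (1 + ‖x‖ ^ 2) ^ (-n) * (1 + ‖v‖) ^ (-γ) := by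
  obtain ⟨K, hK, hkey⟩ := aux_key n γ hn hγ
  refine ⟨K * (2 * π) ^ (-(6 : ℝ)) * (128 * π ^ 4) ^ (3 / 2 : ℝ), by positivity, ?_⟩
  intro g₀ hg t ht x v
  by_cases hD : Dfun t ≤ 0
  · have h0 : ∀ y u, G1ker t x v y u = 0 := by
      intro y u
      simp [G1ker, Real.sqrt_eq_zero_of_nonpos hD]
    simp only [h0, zero_mul, integral_zero, abs_zero]
    positivity
  push Not at hD
  have he0 : 0 < Real.exp (-t) := Real.exp_pos _
  have he1 : Real.exp (-t) < 1 := by rw [Real.exp_lt_one_iff]; linarith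
  have he2 : Real.exp (-(2 * t)) = Real.exp (-t) ^ 2 := by
    rw [← Real.exp_nat_mul]; congr 1; push_cast; ring
  have hDt : Dfun t ≤ t * (1 - Real.exp (-t) ^ 2) / 2 := by
    rw [Dfun, he2]; nlinarith [sq_nonneg (1 - Real.exp (-t))]
  set e := Real.exp (-t) with he
  set D := Dfun t with hDdef
  set α := (1 - e ^ 2) / (8 * D) with hα
  set β := (1 + e ^ 2) / (4 * (1 - e ^ 2)) with hβ
  set a := 2 * e / (1 + e ^ 2) with ha
  set b := (1 - e) / (1 + e) with hb
  have h1e : 0 < 1 - e ^ 2 := by nlinarith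
  have hα0 : 0 < α := by positivity
  have hβ0 : 0 < β := by positivity
  have hgeom := fun y u => aux_geom (t := t) (α := α) (β := β)
    (τ := (1 - e ^ 2) / (1 + e ^ 2)) (a := a) (b := b) ht
    (div_nonneg (by linarith) (by linarith))
    (by rw [hb, div_le_one (by linarith)]; linarith)
    (by rw [hb, div_le_div_iff₀ (by linarith) (by positivity)]; nlinarith [mul_pos he0 h1e, mul_pos he0 (sub_pos.2 he1)])
    (by positivity)
    (by rw [ha, div_le_one (by positivity)]; nlinarith [sq_nonneg (1 - e)])
    (by rw [div_le_one (by positivity)]; nlinarith)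
    (by rw [ha]; field_simp; ring)
    (by rw [hα, ← mul_div_assoc, one_le_div (by positivity)]; nlinarith)
    (by rw [hβ, div_le_div_iff₀ (by positivity) (by positivity)]; nlinarith)
    x v y u
  have hdouble := aux_double (a := a) (b := b) (half_pos hα0) (half_pos hβ0)
    (M := (2 * π) ^ (-(6 : ℝ)) * (π / √D) ^ (3 : ℕ) *
      (K * e * (1 + ‖x‖ ^ 2) ^ (-n) * (1 + ‖v‖) ^ (-γ))) (by positivity) x v
    (fun y u => G1ker t x v y u * g₀ y u) (by
      intro y u
      obtain ⟨g1, g2⟩ := hgeom y u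
      have hk := hkey t _ _ _ _ _ _ _ ht (by positivity) (by positivity)
        (by positivity) (by positivity) (by positivity) (by positivity) (by positivity) g1 g2
      have hG : G1ker t x v y u = (2 * π) ^ (-(6 : ℝ)) * (π / √D) ^ (3 : ℕ) *
          Real.exp (-(α * ‖x - y - b • (v + u)‖ ^ 2 + β * ‖a • v - u‖ ^ 2 +
            (1 - e ^ 2) / (1 + e ^ 2) / 4 * ‖v‖ ^ 2 + 2 * t)) := by
        rw [G1ker, he2, div_div, mul_comm (1 + e ^ 2) 4]
      have hG0 : 0 ≤ G1ker t x v y u := by rw [hG]; positivity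
      rw [abs_mul, abs_of_nonneg hG0]
      refine (mul_le_mul_of_nonneg_left (hg y u) hG0).trans ?_
      rw [hG, mul_assoc, mul_assoc ((2 * π) ^ (-(6 : ℝ)) * (π / √D) ^ (3 : ℕ))]
      refine mul_le_mul_of_nonneg_left ?_ (by positivity)
      rw [div_mul_eq_mul_div α, div_mul_eq_mul_div β]
      exact hk)
  refine hdouble.trans ?_
  have hc := aux_const hα0 hβ0 hD (by
    rw [hα, hβ]
    have : 32 * ((1 - e ^ 2) / (8 * D) * ((1 + e ^ 2) / (4 * (1 - e ^ 2))) * D) = 1 + e ^ 2 := by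
      field_simp
      ring
    rw [this]; nlinarith)
  calc _ = (2 * π) ^ (-(6 : ℝ)) * (K * e * (1 + ‖x‖ ^ 2) ^ (-n) * (1 + ‖v‖) ^ (-γ)) *
        ((π / √D) ^ (3 : ℕ) * ((π / (α / 2)) ^ (3 / 2 : ℝ) * (π / (β / 2)) ^ (3 / 2 : ℝ))) := by
        ring
    _ ≤ (2 * π) ^ (-(6 : ℝ)) * (K * e * (1 + ‖x‖ ^ 2) ^ (-n) * (1 + ‖v‖) ^ (-γ)) *
        (128 * π ^ 4) ^ (3 / 2 : ℝ) := by gcongr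
    _ = _ := by ring

end
end

section
/- For 0 < b < 2, n, γ ≥ 0 and k ∈ {0,1}: if F(s,x,v) satisfies |F(s,x,v)| ≤ s^{-k/2} e^{-bs}(1+|x|²)^{-n}(1+|v|)^{-γ}, then the Duhamel integral satisfies |∫₀ᵗ (G₁(t-s) * F(s))(x,v) ds| ≤ C e^{-bt} (1+|x|²)^{-n} (1+|v|)^{-γ-1} for all t > 0, where G₁ is the explicit kernel of the damped kinetic Fokker-Planck equation. -/
open MeasureTheory Real

noncomputable section

lemma absorb_pow (p ε : ℝ) (hp : 0 ≤ p) (hε : 0 < ε) :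
    ∃ C : ℝ, 0 < C ∧ ∀ r : ℝ, 0 ≤ r → (1 + r) ^ p ≤ C * Real.exp (ε * r) := by
  set δ := ε / (p + 1) with hδ
  have hδ0 : 0 < δ := by positivity
  refine ⟨(1 + 1 / δ) ^ (p + 1), by positivity, fun r hr => ?_⟩
  have h1 : (1 + r) ^ p ≤ (1 + r) ^ (p + 1) :=
    Real.rpow_le_rpow_of_exponent_le (by linarith) (by linarith)
  have h2 : 1 + r ≤ (1 + 1 / δ) * Real.exp (δ * r) := by
    have h3 : δ * r + 1 ≤ Real.exp (δ * r) := Real.add_one_le_exp _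
    calc 1 + r ≤ (1 + 1 / δ) * (δ * r + 1) := by
          have : (1 + 1 / δ) * (δ * r + 1) = 1 + r + δ * r + 1 / δ := by field_simp; ring
          rw [this]
          have : 0 ≤ δ * r + 1 / δ := by positivity
          linarith
      _ ≤ _ := by gcongr
  calc (1 + r) ^ p ≤ (1 + r) ^ (p + 1) := h1
    _ ≤ ((1 + 1 / δ) * Real.exp (δ * r)) ^ (p + 1) :=
        Real.rpow_le_rpow (by linarith) h2 (by linarith)
    _ = (1 + 1 / δ) ^ (p + 1) * Real.exp (ε * r) := by
        rw [Real.mul_rpow (by positivity) (by positivity), ← Real.exp_mul]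
        congr 2
        rw [hδ]; field_simp

lemma core_geom (τ a A c m p : ℝ) (ha : 0 < a) (hτ : 0 < τ) (haτ : 1 ≤ 4 * τ * a)
    (hA : 1 / 4 ≤ A) (hc : 0 ≤ c) (hm0 : 0 ≤ m) (hm1 : m ≤ 1) (hp0 : 0 ≤ p) (hp1 : p ≤ 1)
    (hmc : m ^ 2 ≤ 4 * c) (x v y u : E3) :
    1 + ‖x‖ ^ 2 ≤ 2 * (1 + ‖y‖ ^ 2) * (1 + 4 * τ) *
      (1 + 64 * (a * ‖x - y - m • (v + u)‖ ^ 2)) * (1 + 64 * (A * ‖p • v - u‖ ^ 2)) *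
      (1 + 64 * (c * ‖v‖ ^ 2)) := by
  set w := x - y - m • (v + u) with hw
  set z := p • v - u with hz
  have e1 : x = y + (w + m • ((1 + p) • v - z)) := by
    rw [hw, hz]; module
  have n1 : ‖x‖ ≤ ‖y‖ + (‖w‖ + m * (2 * ‖v‖ + ‖z‖)) := by
    calc ‖x‖ = ‖y + (w + m • ((1 + p) • v - z))‖ := by rw [← e1]
      _ ≤ ‖y‖ + (‖w‖ + ‖m • ((1 + p) • v - z)‖) :=
        (norm_add_le _ _).trans (by gcongr; exact norm_add_le _ _)
      _ ≤ _ := by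
        rw [norm_smul, Real.norm_of_nonneg hm0]
        gcongr
        refine (norm_sub_le _ _).trans ?_
        rw [norm_smul, Real.norm_of_nonneg (by linarith)]
        gcongr
        linarith
  have hx := norm_nonneg x
  have hy := norm_nonneg y
  have hW := norm_nonneg w
  have hZ := norm_nonneg z
  have hV := norm_nonneg v
  generalize ‖x‖ = X at *
  generalize ‖y‖ = Y at *
  generalize ‖w‖ = W at *
  generalize ‖z‖ = Z at *
  generalize ‖v‖ = V at *
  clear hw hz e1
  set R := W + m * (2 * V + Z) with hR
  have hR0 : 0 ≤ R := by positivity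
  have s1 : X ^ 2 ≤ 2 * Y ^ 2 + 2 * R ^ 2 := by
    have : X ^ 2 ≤ (Y + R) ^ 2 := by gcongr
    nlinarith [sq_nonneg (Y - R)]
  have s2 : R ^ 2 ≤ 2 * W ^ 2 + 64 * (c * V ^ 2) + 16 * (A * Z ^ 2) := by
    have h1 : R ^ 2 ≤ 2 * W ^ 2 + 2 * (m ^ 2 * (2 * V + Z) ^ 2) := by
      rw [hR]; nlinarith [sq_nonneg (W - m * (2 * V + Z))]
    have h2 : (2 * V + Z) ^ 2 ≤ 8 * V ^ 2 + 2 * Z ^ 2 := by nlinarith [sq_nonneg (2 * V - Z)]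
    have h3 : m ^ 2 * (2 * V + Z) ^ 2 ≤ m ^ 2 * (8 * V ^ 2 + 2 * Z ^ 2) := by gcongr
    have h4 : m ^ 2 * V ^ 2 ≤ 4 * c * V ^ 2 := by gcongr
    have h5 : m ^ 2 * Z ^ 2 ≤ 4 * A * Z ^ 2 := by
      gcongr; nlinarith
    nlinarith
  have s3 : 1 + 2 * W ^ 2 ≤ (1 + 4 * τ) * (1 + 64 * (a * W ^ 2)) := by
    have : 1 * W ^ 2 ≤ 4 * τ * a * W ^ 2 := by gcongr
    have : 0 ≤ a * W ^ 2 := by positivity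
    nlinarith
  have hcV : 0 ≤ c * V ^ 2 := by positivity
  have hAZ : 0 ≤ A * Z ^ 2 := by have : 0 ≤ A := by linarith
                                 positivity
  calc 1 + X ^ 2 ≤ 2 * (1 + Y ^ 2) * (1 + R ^ 2) := by nlinarith [mul_nonneg (sq_nonneg Y) (sq_nonneg R)]
    _ ≤ 2 * (1 + Y ^ 2) * ((1 + 2 * W ^ 2) * (1 + 64 * (A * Z ^ 2)) * (1 + 64 * (c * V ^ 2))) := by
        gcongr
        have h1 := mul_nonneg hcV hAZ
        have h2 := mul_nonneg hcV (sq_nonneg W)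
        have h3 := mul_nonneg hAZ (sq_nonneg W)
        have h4 := mul_nonneg h1 (sq_nonneg W)
        nlinarith
    _ ≤ 2 * (1 + Y ^ 2) * (((1 + 4 * τ) * (1 + 64 * (a * W ^ 2))) * (1 + 64 * (A * Z ^ 2)) * (1 + 64 * (c * V ^ 2))) := by
        gcongr
    _ = _ := by ring

lemma core_vel (A c p : ℝ)
    (hA : 1 / 4 ≤ A) (hc : 0 ≤ c) (hp0 : 0 ≤ p) (hp1 : p ≤ 1)
    (hpc : (1 - p) ^ 2 ≤ 4 * c) (v u : E3) :
    1 + ‖v‖ ≤ 4 * (1 + ‖u‖) * (1 + 64 * (A * ‖p • v - u‖ ^ 2)) *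
      (1 + 64 * (c * ‖v‖ ^ 2)) := by
  set z := p • v - u with hz
  have e1 : v = u + (z + (1 - p) • v) := by rw [hz]; module
  have n1 : ‖v‖ ≤ ‖u‖ + (‖z‖ + (1 - p) * ‖v‖) := by
    calc ‖v‖ = ‖u + (z + (1 - p) • v)‖ := by rw [← e1]
      _ ≤ ‖u‖ + (‖z‖ + ‖(1 - p) • v‖) :=
        (norm_add_le _ _).trans (by gcongr; exact norm_add_le _ _)
      _ ≤ _ := by
        rw [norm_smul, Real.norm_of_nonneg (by linarith)]
  have hU := norm_nonneg u
  have hZ := norm_nonneg z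
  have hV := norm_nonneg v
  generalize ‖u‖ = U at *
  generalize ‖z‖ = Z at *
  generalize ‖v‖ = V at *
  clear hz e1
  set Q := (1 - p) * V with hQ
  have hQ0 : 0 ≤ Q := mul_nonneg (by linarith) hV
  have q1 : 1 + Q ≤ 2 * (1 + 64 * (c * V ^ 2)) := by
    have : Q ^ 2 ≤ 4 * c * V ^ 2 := by rw [hQ, mul_pow]; gcongr
    nlinarith [sq_nonneg (Q - 1), mul_nonneg hc (sq_nonneg V)]
  have q2 : 1 + Z ≤ 2 * (1 + 64 * (A * Z ^ 2)) := by
    have : 1 / 4 * Z ^ 2 ≤ A * Z ^ 2 := by gcongr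
    nlinarith [sq_nonneg (Z - 1)]
  calc 1 + V ≤ (1 + U) * (1 + Z) * (1 + Q) := by
        have := mul_nonneg hU hZ
        have := mul_nonneg hU hQ0
        have := mul_nonneg hZ hQ0
        have := mul_nonneg (mul_nonneg hU hZ) hQ0
        nlinarith
    _ ≤ (1 + U) * (2 * (1 + 64 * (A * Z ^ 2))) * (2 * (1 + 64 * (c * V ^ 2))) := by gcongr
    _ = _ := by ring

lemma core_pointwise (n γ : ℝ) (hn : 0 ≤ n) (hγ : 0 ≤ γ) :
    ∃ K : ℝ, 0 < K ∧ ∀ (τ a A c m p : ℝ), 0 < a → 0 < τ → 1 ≤ 4 * τ * a →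
    1 / 4 ≤ A → 0 ≤ c → 0 ≤ m → m ≤ 1 → 0 ≤ p → p ≤ 1 →
    m ^ 2 ≤ 4 * c → (1 - p) ^ 2 ≤ 4 * c → ∀ (x v y u : E3),
    Real.exp (-(a * ‖x - y - m • (v + u)‖ ^ 2 + A * ‖p • v - u‖ ^ 2 + c * ‖v‖ ^ 2 + 2 * τ)) *
      ((1 + ‖y‖ ^ 2) ^ (-n) * (1 + ‖u‖) ^ (-γ)) ≤
    K * ((1 + 4 * τ) ^ n * Real.exp (-(2 * τ)) * ((1 + ‖x‖ ^ 2) ^ (-n) * (1 + ‖v‖) ^ (-γ)) *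
      Real.exp (-(c / 2 * ‖v‖ ^ 2))) *
      (Real.exp (-(a / 2) * ‖x - y - m • (v + u)‖ ^ 2) * Real.exp (-(A / 2) * ‖p • v - u‖ ^ 2)) := by
  obtain ⟨C1, hC1, h1⟩ := absorb_pow n (1 / 256) hn (by norm_num)
  obtain ⟨C2, hC2, h2⟩ := absorb_pow γ (1 / 256) hγ (by norm_num)
  refine ⟨2 ^ n * C1 ^ 3 * (4 ^ γ * C2 ^ 2), by positivity, ?_⟩
  intro τ a A c m p ha hτ haτ hA hc hm0 hm1 hp0 hp1 hmc hpc x v y u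
  have g1 := core_geom τ a A c m p ha hτ haτ hA hc hm0 hm1 hp0 hp1 hmc x v y u
  have g2 := core_vel A c p hA hc hp0 hp1 hpc v u
  have hA0 : 0 ≤ A := by linarith
  set P := a * ‖x - y - m • (v + u)‖ ^ 2 with hP
  set Q := A * ‖p • v - u‖ ^ 2 with hQ
  set R := c * ‖v‖ ^ 2 with hR
  have hP0 : 0 ≤ P := by positivity
  have hQ0 : 0 ≤ Q := by positivity
  have hR0 : 0 ≤ R := by positivity
  have r1 : Real.exp (-(a / 2) * ‖x - y - m • (v + u)‖ ^ 2) = Real.exp (-(P / 2)) := by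
    rw [hP]; ring_nf
  have r2 : Real.exp (-(A / 2) * ‖p • v - u‖ ^ 2) = Real.exp (-(Q / 2)) := by
    rw [hQ]; ring_nf
  have r3 : Real.exp (-(c / 2 * ‖v‖ ^ 2)) = Real.exp (-(R / 2)) := by
    rw [hR]; ring_nf
  rw [r1, r2, r3]
  have hX : 0 < 1 + ‖x‖ ^ 2 := by positivity
  have hY : 0 < 1 + ‖y‖ ^ 2 := by positivity
  have hV : 0 < 1 + ‖v‖ := by positivity
  have hU : 0 < 1 + ‖u‖ := by positivity
  generalize 1 + ‖x‖ ^ 2 = X at *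
  generalize 1 + ‖y‖ ^ 2 = Y at *
  generalize 1 + ‖v‖ = V at *
  generalize 1 + ‖u‖ = U at *
  clear_value P Q R
  have k1 : X ^ n ≤ 2 ^ n * Y ^ n * (1 + 4 * τ) ^ n * (C1 * Real.exp (1 / 256 * (64 * P))) *
      (C1 * Real.exp (1 / 256 * (64 * Q))) * (C1 * Real.exp (1 / 256 * (64 * R))) := by
    refine (Real.rpow_le_rpow hX.le g1 hn).trans ?_
    rw [Real.mul_rpow (by positivity) (by positivity), Real.mul_rpow (by positivity) (by positivity),
      Real.mul_rpow (by positivity) (by positivity), Real.mul_rpow (by positivity) (by positivity),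
      Real.mul_rpow (by positivity) (by positivity)]
    gcongr
    · exact h1 _ (by positivity)
    · exact h1 _ (by positivity)
    · exact h1 _ (by positivity)
  have k2 : V ^ γ ≤ 4 ^ γ * U ^ γ * (C2 * Real.exp (1 / 256 * (64 * Q))) *
      (C2 * Real.exp (1 / 256 * (64 * R))) := by
    refine (Real.rpow_le_rpow hV.le g2 hγ).trans ?_
    rw [Real.mul_rpow (by positivity) (by positivity), Real.mul_rpow (by positivity) (by positivity),
      Real.mul_rpow (by positivity) (by positivity)]
    gcongr
    · exact h2 _ (by positivity)
    · exact h2 _ (by positivity)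
  rw [Real.rpow_neg hX.le, Real.rpow_neg hY.le, Real.rpow_neg hV.le, Real.rpow_neg hU.le]
  have hXn : 0 < X ^ n := by positivity
  have hYn : 0 < Y ^ n := by positivity
  have hVn : 0 < V ^ γ := by positivity
  have hUn : 0 < U ^ γ := by positivity
  have k3 := mul_le_mul k1 k2 hVn.le (by positivity)
  have hE : Real.exp (-(P + Q + R + 2 * τ)) * (Real.exp (1 / 256 * (64 * P)) *
      Real.exp (1 / 256 * (64 * Q)) * Real.exp (1 / 256 * (64 * R)) *
      Real.exp (1 / 256 * (64 * Q)) * Real.exp (1 / 256 * (64 * R))) ≤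
      Real.exp (-(2 * τ)) * Real.exp (-(R / 2)) * (Real.exp (-(P / 2)) * Real.exp (-(Q / 2))) := by
    simp only [← Real.exp_add]
    apply Real.exp_le_exp.mpr
    linarith
  have k4 : Real.exp (-(P + Q + R + 2 * τ)) * (X ^ n * V ^ γ) ≤
      (2 ^ n * C1 ^ 3 * (4 ^ γ * C2 ^ 2)) * ((1 + 4 * τ) ^ n) * (Y ^ n * U ^ γ) *
      (Real.exp (-(2 * τ)) * Real.exp (-(R / 2)) * (Real.exp (-(P / 2)) * Real.exp (-(Q / 2)))) := by
    calc _ ≤ Real.exp (-(P + Q + R + 2 * τ)) * _ := mul_le_mul_of_nonneg_left k3 (Real.exp_pos _).le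
      _ = (2 ^ n * C1 ^ 3 * (4 ^ γ * C2 ^ 2)) * ((1 + 4 * τ) ^ n) * (Y ^ n * U ^ γ) *
        (Real.exp (-(P + Q + R + 2 * τ)) * (Real.exp (1 / 256 * (64 * P)) *
      Real.exp (1 / 256 * (64 * Q)) * Real.exp (1 / 256 * (64 * R)) *
      Real.exp (1 / 256 * (64 * Q)) * Real.exp (1 / 256 * (64 * R)))) := by ring
      _ ≤ _ := by gcongr
  have k5 := mul_le_mul_of_nonneg_right k4
    (show 0 ≤ (X ^ n)⁻¹ * (V ^ γ)⁻¹ * ((Y ^ n)⁻¹ * (U ^ γ)⁻¹) by positivity)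
  calc _ = Real.exp (-(P + Q + R + 2 * τ)) * (X ^ n * V ^ γ) *
        ((X ^ n)⁻¹ * (V ^ γ)⁻¹ * ((Y ^ n)⁻¹ * (U ^ γ)⁻¹)) := by field_simp
    _ ≤ _ := k5
    _ = _ := by field_simp

lemma lint_gauss (β : ℝ) (hβ : 0 < β) :
    ∫⁻ w : E3, ENNReal.ofReal (Real.exp (-β * ‖w‖ ^ 2)) = ENNReal.ofReal (√(Real.pi / β) ^ 3) := by
  have hI : ∫ w : E3, Real.exp (-β * ‖w‖ ^ 2) = √(Real.pi / β) ^ 3 := by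
    rw [GaussianFourier.integral_rexp_neg_mul_sq_norm hβ]
    rw [Real.sqrt_eq_rpow, ← Real.rpow_natCast, ← Real.rpow_mul (by positivity)]
    simp
    norm_num
  rw [← hI, ofReal_integral_eq_lintegral_ofReal]
  · by_contra h
    rw [integral_undef h] at hI
    have : 0 < √(Real.pi / β) ^ 3 := by positivity
    linarith
  · exact Filter.Eventually.of_forall fun _ => (Real.exp_pos _).le

lemma lint_gauss_two (α β m p : ℝ) (hα : 0 < α) (hβ : 0 < β) (x v : E3) :
    ∫⁻ y : E3, ∫⁻ u : E3, ENNReal.ofReal (Real.exp (-α * ‖x - y - m • (v + u)‖ ^ 2) *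
      Real.exp (-β * ‖p • v - u‖ ^ 2)) =
    ENNReal.ofReal (√(Real.pi / α) ^ 3) * ENNReal.ofReal (√(Real.pi / β) ^ 3) := by
  rw [lintegral_lintegral_swap]
  · simp_rw [ENNReal.ofReal_mul (Real.exp_pos _).le]
    have : ∀ u : E3, ∫⁻ y : E3, ENNReal.ofReal (Real.exp (-α * ‖x - y - m • (v + u)‖ ^ 2)) *
        ENNReal.ofReal (Real.exp (-β * ‖p • v - u‖ ^ 2)) =
        ENNReal.ofReal (√(Real.pi / α) ^ 3) * ENNReal.ofReal (Real.exp (-β * ‖p • v - u‖ ^ 2)) := by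
      intro u
      rw [lintegral_mul_const _ (by fun_prop), ← lint_gauss α hα]
      congr 1
      rw [← lintegral_sub_left_eq_self _ (x - m • (v + u))]
      congr 1; ext y; congr 5; abel
    simp_rw [this]
    rw [lintegral_const_mul _ (by fun_prop), ← lint_gauss β hβ]
    congr 1
    exact lintegral_sub_left_eq_self (fun w : E3 => ENNReal.ofReal (Real.exp (-β * ‖w‖ ^ 2))) (p • v)
  · fun_prop

lemma vel_gain (τ c : ℝ) (hτ : 0 < τ) (hc : τ / (1 + 2 * τ) / 4 ≤ c) (γ : ℝ) (V : ℝ) (hV : 0 ≤ V) :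
    (1 + V) ^ (-γ) * Real.exp (-(c / 2 * V ^ 2)) ≤
      16 * (τ ^ (-(1 / 2) : ℝ) * (1 + 4 * τ)) * (1 + V) ^ (-(γ + 1)) := by
  set θ := τ / (1 + 2 * τ) with hθ
  have hθ0 : 0 < θ := by positivity
  have hθ1 : θ ≤ 1 := by rw [hθ, div_le_one (by positivity)]; linarith
  have hs : √θ ≤ 1 := Real.sqrt_le_one.mpr hθ1
  have hs0 : 0 < √θ := Real.sqrt_pos.mpr hθ0
  have hss : √θ ^ 2 = θ := Real.sq_sqrt hθ0.le
  have h1 : (1 + V) * √θ ≤ 16 * Real.exp (θ * V ^ 2 / 8) := by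
    have := Real.add_one_le_exp (θ * V ^ 2 / 8)
    have h2 : √θ * V ≤ 1 + θ * V ^ 2 := by
      have h6 : θ * V ^ 2 = (√θ * V) ^ 2 := by rw [mul_pow, hss]
      rw [h6]; nlinarith [sq_nonneg (√θ * V - 1), mul_nonneg hs0.le hV]
    nlinarith [mul_nonneg hθ0.le (sq_nonneg V)]
  have h2 : (√θ)⁻¹ ≤ τ ^ (-(1 / 2) : ℝ) * (1 + 4 * τ) := by
    rw [hθ, Real.sqrt_div hτ.le, inv_div, Real.rpow_neg hτ.le, ← Real.sqrt_eq_rpow, div_eq_inv_mul]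
    gcongr
    rw [Real.sqrt_le_left (by positivity)]
    nlinarith
  have h3 : Real.exp (-(c / 2 * V ^ 2)) ≤ Real.exp (-(θ * V ^ 2 / 8)) := by
    apply Real.exp_le_exp.mpr
    nlinarith [mul_le_mul_of_nonneg_right hc (sq_nonneg V)]
  have h4 : (1 + V) * Real.exp (-(c / 2 * V ^ 2)) ≤ 16 * (√θ)⁻¹ := by
    calc (1 + V) * Real.exp (-(c / 2 * V ^ 2)) ≤ (1 + V) * Real.exp (-(θ * V ^ 2 / 8)) := by gcongr
      _ = ((1 + V) * √θ) * Real.exp (-(θ * V ^ 2 / 8)) * (√θ)⁻¹ := by field_simp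
      _ ≤ (16 * Real.exp (θ * V ^ 2 / 8)) * Real.exp (-(θ * V ^ 2 / 8)) * (√θ)⁻¹ := by gcongr
      _ = 16 * (√θ)⁻¹ := by
        rw [mul_assoc 16, ← Real.exp_add]; simp
  have h5 : (1 + V) ^ (-γ) = (1 + V) ^ (-(γ + 1)) * (1 + V) := by
    rw [← Real.rpow_add_one (by positivity)]; congr 1; ring
  rw [h5]
  calc _ = (1 + V) ^ (-(γ + 1)) * ((1 + V) * Real.exp (-(c / 2 * V ^ 2))) := by ring
    _ ≤ (1 + V) ^ (-(γ + 1)) * (16 * (τ ^ (-(1 / 2) : ℝ) * (1 + 4 * τ))) := by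
      refine mul_le_mul_of_nonneg_left (h4.trans ?_) (by positivity)
      exact mul_le_mul_of_nonneg_left h2 (by norm_num)
    _ = _ := by ring

set_option maxHeartbeats 2000000 in
lemma kernel_bound (n γ : ℝ) (hn : 0 ≤ n) (hγ : 0 ≤ γ) :
    ∃ C : ℝ, 0 < C ∧ ∀ τ : ℝ, 0 < τ → ∀ x v : E3,
      ∫⁻ y : E3, ∫⁻ u : E3, ENNReal.ofReal
        (G1ker τ x v y u * ((1 + ‖y‖ ^ 2) ^ (-n) * (1 + ‖u‖) ^ (-γ))) ≤
      ENNReal.ofReal (C * (τ ^ (-(1 / 2) : ℝ) * (1 + 4 * τ) ^ (n + 1) * Real.exp (-(2 * τ))) *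
        ((1 + ‖x‖ ^ 2) ^ (-n) * (1 + ‖v‖) ^ (-(γ + 1)))) := by
  obtain ⟨K, hK, hcore⟩ := core_pointwise n γ hn hγ
  set M : ℝ := (2 * Real.pi) ^ (-(6 : ℝ)) * (Real.pi * √(128 * Real.pi ^ 2)) ^ 3 with hM
  have hM0 : 0 < M := by positivity
  refine ⟨M * K * 16, by positivity, ?_⟩
  intro τ hτ x v
  by_cases hD : 0 < Dfun τ
  swap
  · have : ∀ y u, G1ker τ x v y u = 0 := by
      intro y u
      simp [G1ker, Real.sqrt_eq_zero_of_nonpos (not_lt.mp hD)]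
    simp [this]
  set e := Real.exp (-τ) with he
  have he2 : Real.exp (-(2 * τ)) = e ^ 2 := by
    rw [he, ← Real.exp_nat_mul]; congr 1; push_cast; ring
  have he0 : 0 < e := Real.exp_pos _
  have he1 : e < 1 := by rw [he]; have := Real.exp_lt_exp.mpr (show -τ < 0 by linarith); rwa [Real.exp_zero] at this
  have hq : 0 < 1 - e ^ 2 := by nlinarith
  set D := Dfun τ with hDdef
  have hDle : 2 * D ≤ τ * (1 - e ^ 2) := by
    rw [hDdef, Dfun, he2, ← he]; nlinarith [sq_nonneg (1 - e)]
  set a := (1 - e ^ 2) / (8 * D) with ha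
  set A := (1 + e ^ 2) / (4 * (1 - e ^ 2)) with hA
  set c := (1 - e ^ 2) / (4 * (1 + e ^ 2)) with hc
  set m := (1 - e) / (1 + e) with hm
  set p := 2 * e / (1 + e ^ 2) with hp
  have ha0 : 0 < a := by positivity
  have hA4 : 1 / 4 ≤ A := by
    rw [hA, div_le_div_iff₀ (by norm_num) (by positivity)]; nlinarith
  have hc0 : 0 ≤ c := by positivity
  have hm0 : 0 ≤ m := div_nonneg (by linarith) (by linarith)
  have hm1 : m ≤ 1 := by rw [hm, div_le_one (by linarith)]; linarith
  have hp0 : 0 ≤ p := by positivity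
  have hp1 : p ≤ 1 := by rw [hp, div_le_one (by positivity)]; nlinarith [sq_nonneg (1 - e)]
  have hc4 : 4 * c = (1 - e ^ 2) / (1 + e ^ 2) := by rw [hc]; field_simp
  have hmc : m ^ 2 ≤ 4 * c := by
    have : m ≤ 4 * c := by
      rw [hc4, hm, div_le_div_iff₀ (by positivity) (by positivity)]
      have : (1 - e ^ 2) * (1 + e) - (1 - e) * (1 + e ^ 2) = (1 - e) * (2 * e) := by ring
      have : 0 ≤ (1 - e) * (2 * e) := mul_nonneg (by linarith) (by linarith)
      linarith
    nlinarith
  have hpc : (1 - p) ^ 2 ≤ 4 * c := by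
    have : 1 - p ≤ 4 * c := by
      have h : 1 - p = (1 - e) ^ 2 / (1 + e ^ 2) := by rw [hp]; field_simp; ring
      rw [hc4, h]; gcongr; nlinarith
    nlinarith
  have haτ : 1 ≤ 4 * τ * a := by
    rw [ha, ← mul_div_assoc, le_div_iff₀ (by positivity)]; nlinarith
  have hcθ : τ / (1 + 2 * τ) / 4 ≤ c := by
    have h1 : e ^ 2 * (1 + 2 * τ) ≤ 1 := by
      have := Real.add_one_le_exp (2 * τ)
      calc e ^ 2 * (1 + 2 * τ) ≤ e ^ 2 * Real.exp (2 * τ) := by gcongr; linarith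
        _ = 1 := by rw [← he2, ← Real.exp_add]; simp
    have : τ / (1 + 2 * τ) ≤ 4 * c := by
      rw [hc4, div_le_div_iff₀ (by positivity) (by positivity)]
      nlinarith
    linarith
  have hpt := hcore τ a A c m p ha0 hτ haτ hA4 hc0 hm0 hm1 hp0 hp1 hmc hpc x v
  set B := (2 * Real.pi) ^ (-(6 : ℝ)) * (Real.pi / √D) ^ 3 with hB
  have hB0 : 0 ≤ B := by positivity
  set J := K * ((1 + 4 * τ) ^ n * Real.exp (-(2 * τ)) * ((1 + ‖x‖ ^ 2) ^ (-n) * (1 + ‖v‖) ^ (-γ)) *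
      Real.exp (-(c / 2 * ‖v‖ ^ 2))) with hJ
  have hJ0 : 0 ≤ J := by positivity
  have hA0 : 0 < A := by linarith
  calc _ ≤ ∫⁻ y : E3, ∫⁻ u : E3, ENNReal.ofReal (B * J) * ENNReal.ofReal
        (Real.exp (-(a / 2) * ‖x - y - m • (v + u)‖ ^ 2) * Real.exp (-(A / 2) * ‖p • v - u‖ ^ 2)) := by
        refine lintegral_mono fun y => lintegral_mono fun u => ?_
        rw [← ENNReal.ofReal_mul (by positivity)]
        apply ENNReal.ofReal_le_ofReal
        have := mul_le_mul_of_nonneg_left (hpt y u) hB0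
        calc _ = B * (Real.exp (-(a * ‖x - y - m • (v + u)‖ ^ 2 + A * ‖p • v - u‖ ^ 2 + c * ‖v‖ ^ 2 + 2 * τ)) *
      ((1 + ‖y‖ ^ 2) ^ (-n) * (1 + ‖u‖) ^ (-γ))) := by
              simp only [G1ker, he2, ← he, ← hDdef, ← ha, ← hA, ← hc, ← hm, ← hp]
              rw [← hB]; ring
          _ ≤ _ := this
          _ = _ := by ring
    _ = ENNReal.ofReal (B * J) * (ENNReal.ofReal (√(Real.pi / (a / 2)) ^ 3) *
          ENNReal.ofReal (√(Real.pi / (A / 2)) ^ 3)) := by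
        rw [← lint_gauss_two (a / 2) (A / 2) m p (by positivity) (by positivity) x v]
        simp_rw [lintegral_const_mul' _ _ ENNReal.ofReal_ne_top]
    _ = ENNReal.ofReal (B * √(Real.pi / (a / 2)) ^ 3 * √(Real.pi / (A / 2)) ^ 3 * J) := by
        rw [← ENNReal.ofReal_mul (by positivity), ← ENNReal.ofReal_mul (by positivity)]
        congr 1; ring
    _ ≤ _ := by
        apply ENNReal.ofReal_le_ofReal
        have hBM : B * √(Real.pi / (a / 2)) ^ 3 * √(Real.pi / (A / 2)) ^ 3 ≤ M := by
          have h1 : Real.pi / √D * √(Real.pi / (a / 2)) * √(Real.pi / (A / 2)) ≤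
              Real.pi * √(128 * Real.pi ^ 2) := by
            rw [div_eq_mul_inv, ← Real.sqrt_inv, mul_assoc, mul_assoc, ← Real.sqrt_mul (by positivity),
              ← Real.sqrt_mul (by positivity)]
            refine mul_le_mul_of_nonneg_left (Real.sqrt_le_sqrt ?_) Real.pi_pos.le
            have : D⁻¹ * (Real.pi / (a / 2) * (Real.pi / (A / 2))) = 128 * Real.pi ^ 2 / (1 + e ^ 2) := by
              rw [ha, hA]; field_simp; ring
            rw [this]
            exact div_le_self (by positivity) (by linarith [sq_nonneg e])
          calc _ = (2 * Real.pi) ^ (-(6 : ℝ)) * (Real.pi / √D * √(Real.pi / (a / 2)) * √(Real.pi / (A / 2))) ^ 3 := by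
                rw [hB]; ring
            _ ≤ _ := by rw [hM]; gcongr
        have hg := vel_gain τ c hτ hcθ γ ‖v‖ (norm_nonneg _)
        have hJle : J ≤ K * 16 * (τ ^ (-(1 / 2) : ℝ) * (1 + 4 * τ) ^ (n + 1) * Real.exp (-(2 * τ))) *
            ((1 + ‖x‖ ^ 2) ^ (-n) * (1 + ‖v‖) ^ (-(γ + 1))) := by
          rw [Real.rpow_add_one (by positivity)]
          calc J = K * ((1 + 4 * τ) ^ n * Real.exp (-(2 * τ)) * (1 + ‖x‖ ^ 2) ^ (-n)) *
                ((1 + ‖v‖) ^ (-γ) * Real.exp (-(c / 2 * ‖v‖ ^ 2))) := by rw [hJ]; ring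
            _ ≤ K * ((1 + 4 * τ) ^ n * Real.exp (-(2 * τ)) * (1 + ‖x‖ ^ 2) ^ (-n)) *
                (16 * (τ ^ (-(1 / 2) : ℝ) * (1 + 4 * τ)) * (1 + ‖v‖) ^ (-(γ + 1))) :=
                mul_le_mul_of_nonneg_left hg (by positivity)
            _ = _ := by ring
        rw [he2] at *
        calc _ ≤ M * _ := mul_le_mul hBM hJle hJ0 hM0.le
          _ = _ := by ring

lemma lint_inv_sqrt (t : ℝ) (ht : 0 < t) :
    ∫⁻ s in Set.Ioo 0 t, ENNReal.ofReal (s ^ (-(1 / 2) : ℝ)) = ENNReal.ofReal (2 * √t) := by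
  have h1 : IntervalIntegrable (fun s : ℝ => s ^ (-(1 / 2) : ℝ)) volume 0 t :=
    intervalIntegral.intervalIntegrable_rpow' (by norm_num)
  have h2 : ∫ s in (0 : ℝ)..t, s ^ (-(1 / 2) : ℝ) = 2 * √t := by
    rw [integral_rpow (Or.inl (by norm_num))]
    rw [Real.zero_rpow (by norm_num), Real.sqrt_eq_rpow]
    norm_num
    ring
  rw [restrict_Ioo_eq_restrict_Ioc, ← h2, intervalIntegral.integral_of_le ht.le,
    ofReal_integral_eq_lintegral_ofReal]
  · exact (intervalIntegrable_iff_integrableOn_Ioc_of_le ht.le).mp h1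
  · filter_upwards [ae_restrict_mem measurableSet_Ioc] with s hs
    exact Real.rpow_nonneg hs.1.le _

lemma lint_reflect (t : ℝ) (f : ℝ → ENNReal) :
    ∫⁻ s in Set.Ioo 0 t, f (t - s) = ∫⁻ s in Set.Ioo 0 t, f s := by
  rw [← lintegral_indicator measurableSet_Ioo, ← lintegral_indicator measurableSet_Ioo,
    ← lintegral_sub_left_eq_self _ t]
  congr 1; ext s
  simp only [Set.indicator, Set.mem_Ioo]
  simp [and_comm]

lemma time_bound (δ : ℝ) (hδ : 0 < δ) (k : ℕ) (hk : k ≤ 1) :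
    ∃ C : ℝ, 0 < C ∧ ∀ t : ℝ, 0 < t →
      ∫⁻ s in Set.Ioo 0 t, ENNReal.ofReal (s ^ (-(k : ℝ) / 2) *
        ((t - s) ^ (-(1 / 2) : ℝ) * Real.exp (-(δ * (t - s))))) ≤ ENNReal.ofReal C := by
  interval_cases k
  · have hI : IntegrableOn (fun r : ℝ => r ^ (-(1 / 2) : ℝ) * Real.exp (-δ * r)) (Set.Ioi 0) := by
      have := integrableOn_rpow_mul_exp_neg_mul_rpow (s := -(1 / 2)) (p := 1) (b := δ) (by norm_num) (by norm_num) hδ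
      simpa using this
    refine ⟨(∫ r in Set.Ioi 0, r ^ (-(1 / 2) : ℝ) * Real.exp (-δ * r)) + 1, ?_, ?_⟩
    · have : 0 ≤ ∫ r in Set.Ioi 0, r ^ (-(1 / 2) : ℝ) * Real.exp (-δ * r) :=
        setIntegral_nonneg measurableSet_Ioi fun r hr => by
          have : 0 < r := hr
          positivity
      linarith
    intro t ht
    calc _ = ∫⁻ s in Set.Ioo 0 t, ENNReal.ofReal
          ((t - s) ^ (-(1 / 2) : ℝ) * Real.exp (-δ * (t - s))) := by
            simp
      _ = ∫⁻ s in Set.Ioo 0 t, ENNReal.ofReal (s ^ (-(1 / 2) : ℝ) * Real.exp (-δ * s)) :=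
          lint_reflect t (fun s => ENNReal.ofReal (s ^ (-(1 / 2) : ℝ) * Real.exp (-δ * s)))
      _ ≤ ∫⁻ s in Set.Ioi 0, ENNReal.ofReal (s ^ (-(1 / 2) : ℝ) * Real.exp (-δ * s)) :=
          lintegral_mono_set Set.Ioo_subset_Ioi_self
      _ = ENNReal.ofReal (∫ r in Set.Ioi 0, r ^ (-(1 / 2) : ℝ) * Real.exp (-δ * r)) := by
          rw [ofReal_integral_eq_lintegral_ofReal hI]
          filter_upwards [ae_restrict_mem measurableSet_Ioi] with r hr
          have : 0 < r := hr
          positivity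
      _ ≤ _ := ENNReal.ofReal_le_ofReal (by linarith)
  · refine ⟨8, by norm_num, fun t ht => ?_⟩
    have hst : 0 < √t := Real.sqrt_pos.mpr ht
    have pw : ∀ s ∈ Set.Ioo 0 t, ENNReal.ofReal (s ^ (-((1 : ℕ) : ℝ) / 2) *
        ((t - s) ^ (-(1 / 2) : ℝ) * Real.exp (-(δ * (t - s))))) ≤
        ENNReal.ofReal (2 / √t) * (ENNReal.ofReal (s ^ (-(1 / 2) : ℝ)) +
          ENNReal.ofReal ((t - s) ^ (-(1 / 2) : ℝ))) := by
      intro s hs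
      have h1 : 0 < s := hs.1
      have h2 : 0 < t - s := by linarith [hs.2]
      rw [← ENNReal.ofReal_add (by positivity) (by positivity), ← ENNReal.ofReal_mul (by positivity)]
      apply ENNReal.ofReal_le_ofReal
      have e1 : s ^ (-((1 : ℕ) : ℝ) / 2) = (√s)⁻¹ := by
        rw [Real.sqrt_eq_rpow, ← Real.rpow_neg h1.le]; norm_num
      have e2 : s ^ (-(1 / 2) : ℝ) = (√s)⁻¹ := by
        rw [Real.sqrt_eq_rpow, ← Real.rpow_neg h1.le]
      have e3 : (t - s) ^ (-(1 / 2) : ℝ) = (√(t - s))⁻¹ := by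
        rw [Real.sqrt_eq_rpow, ← Real.rpow_neg h2.le]
      rw [e1, e2, e3]
      have p1 : 0 < √s := Real.sqrt_pos.mpr h1
      have p2 : 0 < √(t - s) := Real.sqrt_pos.mpr h2
      have h3 : Real.exp (-(δ * (t - s))) ≤ 1 := Real.exp_le_one_iff.mpr (by
        have := mul_pos hδ h2; linarith)
      have h4 : √t ≤ √s + √(t - s) := by
        rw [Real.sqrt_le_left (by positivity)]
        nlinarith [Real.sq_sqrt h1.le, Real.sq_sqrt h2.le]
      calc _ ≤ (√s)⁻¹ * ((√(t - s))⁻¹ * 1) := by gcongr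
        _ = 1 / √t * (√t / (√s * √(t - s))) := by field_simp
        _ ≤ 1 / √t * ((√s + √(t - s)) / (√s * √(t - s))) := by gcongr
        _ = 1 / √t * ((√s)⁻¹ + (√(t - s))⁻¹) := by field_simp; ring
        _ ≤ _ := by gcongr; norm_num
    refine (setLIntegral_mono' measurableSet_Ioo pw).trans ?_
    rw [lintegral_const_mul' _ _ ENNReal.ofReal_ne_top, lintegral_add_left (by fun_prop),
      lint_reflect t (fun s => ENNReal.ofReal (s ^ (-(1 / 2) : ℝ))), lint_inv_sqrt t ht,
      ← ENNReal.ofReal_add (by positivity) (by positivity), ← ENNReal.ofReal_mul (by positivity)]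
    apply ENNReal.ofReal_le_ofReal
    apply le_of_eq
    field_simp; norm_num

/-- Pointwise decay of the Duhamel integral `∫₀ᵗ G₁(t-s) * F(s) ds`
(estimate (4.4) of Lemma 4.2). -/
theorem G1_duhamel_decay (b n γ : ℝ) (hb0 : 0 < b) (hb2 : b < 2)
    (hn : 0 ≤ n) (hγ : 0 ≤ γ) (k : ℕ) (hk : k ≤ 1) :
    ∃ C : ℝ, 0 < C ∧ ∀ F : ℝ → E3 → E3 → ℝ,
      (∀ s : ℝ, 0 < s → ∀ y u : E3,
        |F s y u| ≤ s ^ (-(k : ℝ) / 2) * Real.exp (-(b * s)) *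
          (1 + ‖y‖ ^ 2) ^ (-n) * (1 + ‖u‖) ^ (-γ)) →
      ∀ t : ℝ, 0 < t → ∀ x v : E3,
        |∫ s in Set.Ioo (0 : ℝ) t, ∫ y : E3, ∫ u : E3, G1ker (t - s) x v y u * F s y u| ≤
          C * Real.exp (-(b * t)) * (1 + ‖x‖ ^ 2) ^ (-n) * (1 + ‖v‖) ^ (-(γ + 1)) := by
  obtain ⟨C1, hC1, hker⟩ := kernel_bound n γ hn hγ
  obtain ⟨C2, hC2, habs⟩ := absorb_pow (n + 1) ((2 - b) / 8) (by linarith) (by linarith)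
  obtain ⟨C3, hC3, htime⟩ := time_bound ((2 - b) / 2) (by linarith) k hk
  refine ⟨C1 * C2 * C3, by positivity, ?_⟩
  intro F hF t ht x v
  set H := (1 + ‖x‖ ^ 2) ^ (-n) * (1 + ‖v‖) ^ (-(γ + 1)) with hH
  have hH0 : 0 ≤ H := by positivity
  have hfin : 0 ≤ C1 * C2 * C3 * Real.exp (-(b * t)) * (1 + ‖x‖ ^ 2) ^ (-n) * (1 + ‖v‖) ^ (-(γ + 1)) := by
    positivity
  have hGpos : ∀ τ y u, 0 ≤ G1ker τ x v y u := by
    intro τ y u; unfold G1ker; positivity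
  rw [← ENNReal.ofReal_le_ofReal_iff hfin, ← Real.enorm_eq_ofReal_abs]
  refine (enorm_integral_le_lintegral_enorm _).trans ?_
  have step : ∀ s ∈ Set.Ioo (0 : ℝ) t,
      ‖∫ y : E3, ∫ u : E3, G1ker (t - s) x v y u * F s y u‖ₑ ≤
      ENNReal.ofReal (C1 * C2 * Real.exp (-(b * t)) * H) * ENNReal.ofReal (s ^ (-(k : ℝ) / 2) *
        ((t - s) ^ (-(1 / 2) : ℝ) * Real.exp (-((2 - b) / 2 * (t - s))))) := by
    intro s hs
    have hs0 : 0 < s := hs.1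
    have hτ : 0 < t - s := by linarith [hs.2]
    have hS0 : 0 ≤ s ^ (-(k : ℝ) / 2) * Real.exp (-(b * s)) := by positivity
    calc _ ≤ ∫⁻ y : E3, ∫⁻ u : E3, ‖G1ker (t - s) x v y u * F s y u‖ₑ :=
          (enorm_integral_le_lintegral_enorm _).trans
            (lintegral_mono fun y => enorm_integral_le_lintegral_enorm _)
      _ ≤ ∫⁻ y : E3, ∫⁻ u : E3, ENNReal.ofReal (s ^ (-(k : ℝ) / 2) * Real.exp (-(b * s))) *
          ENNReal.ofReal (G1ker (t - s) x v y u * ((1 + ‖y‖ ^ 2) ^ (-n) * (1 + ‖u‖) ^ (-γ))) := by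
          refine lintegral_mono fun y => lintegral_mono fun u => ?_
          rw [Real.enorm_eq_ofReal_abs, ← ENNReal.ofReal_mul hS0]
          apply ENNReal.ofReal_le_ofReal
          rw [abs_mul, abs_of_nonneg (hGpos _ _ _)]
          calc _ ≤ G1ker (t - s) x v y u * _ := mul_le_mul_of_nonneg_left (hF s hs0 y u) (hGpos _ _ _)
            _ = _ := by ring
      _ = ENNReal.ofReal (s ^ (-(k : ℝ) / 2) * Real.exp (-(b * s))) * ∫⁻ y : E3, ∫⁻ u : E3,
          ENNReal.ofReal (G1ker (t - s) x v y u * ((1 + ‖y‖ ^ 2) ^ (-n) * (1 + ‖u‖) ^ (-γ))) := by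
          simp_rw [lintegral_const_mul' _ _ ENNReal.ofReal_ne_top]
      _ ≤ ENNReal.ofReal (s ^ (-(k : ℝ) / 2) * Real.exp (-(b * s))) * _ :=
          mul_le_mul' le_rfl (hker (t - s) hτ x v)
      _ ≤ _ := by
          rw [← ENNReal.ofReal_mul hS0, ← ENNReal.ofReal_mul (by positivity), ← hH]
          apply ENNReal.ofReal_le_ofReal
          have h1 := habs (4 * (t - s)) (by linarith)
          have h2 : Real.exp (-(b * s)) * (Real.exp ((2 - b) / 8 * (4 * (t - s))) * Real.exp (-(2 * (t - s)))) =
              Real.exp (-(b * t)) * Real.exp (-((2 - b) / 2 * (t - s))) := by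
            simp only [← Real.exp_add]; congr 1; ring
          have hr : 0 ≤ (t - s) ^ (-(1 / 2) : ℝ) := by positivity
          calc _ ≤ s ^ (-(k : ℝ) / 2) * Real.exp (-(b * s)) * (C1 * ((t - s) ^ (-(1 / 2) : ℝ) *
                (C2 * Real.exp ((2 - b) / 8 * (4 * (t - s)))) * Real.exp (-(2 * (t - s)))) * H) := by
                gcongr
            _ = C1 * C2 * H * s ^ (-(k : ℝ) / 2) * (t - s) ^ (-(1 / 2) : ℝ) *
                (Real.exp (-(b * s)) * (Real.exp ((2 - b) / 8 * (4 * (t - s))) * Real.exp (-(2 * (t - s))))) := by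
                ring
            _ = _ := by rw [h2]; ring
  refine (setLIntegral_mono' measurableSet_Ioo step).trans ?_
  rw [lintegral_const_mul' _ _ ENNReal.ofReal_ne_top]
  calc _ ≤ ENNReal.ofReal (C1 * C2 * Real.exp (-(b * t)) * H) * ENNReal.ofReal C3 := by
        gcongr
        exact htime t ht
    _ = _ := by
        rw [← ENNReal.ofReal_mul (by positivity)]
        congr 1; rw [hH]; ring

end
end
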